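/- Under random partitioning, conditional on two distinct units i (attribute a) and j (attribute a') being in the same group, the probability that unit i's peer attribute multiset equals r and unit j's equals r' is zero unless a' ∈ r, a ∈ r', and r with one copy of a' removed equals r' with one copy of a removed; in the nondegenerate case with a ≠ a' it equals C(n_{[a]}−1, r(a)) C(n_{[a']}−1, r(a')−1) Π_{q≠a,a'} C(n_{[q]}, r(q)) / C(n−2, K−1). -/

import Mathlib

open Finset

/-- The set of assignments of `n = m*(K+1)` units into `m` (labeled) groups of
size `K + 1`; the uniform distribution on this set models random partitioning. -/
def groupAssignSet (m K : ℕ) : Finset (Fin (m * (K + 1)) → Fin m) :=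
  univ.filter (fun g => ∀ t : Fin m, (univ.filter (fun i => g i = t)).card = K + 1)

/-- Peer attribute counts: unit `j ≠ i` in the same group as `i` with attribute `q`. -/
def peerCount {m K Hn : ℕ} (A : Fin (m * (K + 1)) → Fin Hn)
    (g : Fin (m * (K + 1)) → Fin m) (i : Fin (m * (K + 1))) (q : Fin Hn) : ℕ :=
  (univ.filter (fun j => j ≠ i ∧ g j = g i ∧ A j = q)).card

/-!
The family of all balanced assignments is stable under relabelling the units, so the number of
assignments in which a given set `T` of units forms one group depends only on the size of `T`.
For `S` avoiding `i` and `j`, the units `i` and `j` share a group with `S` as their common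
groupmates exactly when `{i, j} ∪ S` is a group. Hence, given that `i` and `j` share a group, their
common groupmates are a uniformly random `(K - 1)`-subset of the other `n - 2` units, and their
attribute counts follow the multivariate hypergeometric law. The peers of `i` are the common
groupmates together with `j`, those of `j` are the common groupmates together with `i`.
-/

section UniformFibers

variable {α β : Type*} [DecidableEq β] {s : Finset α} {t : Finset β} {f : α → β}

lemma card_filter_comp_eq_mul_of_card_fiber_eq {c : ℕ} (hf : ∀ a ∈ s, f a ∈ t)
    (hc : ∀ b ∈ t, #{a ∈ s | f a = b} = c) (p : β → Prop) [DecidablePred p] :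
    #{a ∈ s | p (f a)} = #{b ∈ t | p b} * c := by
  have hst : {a ∈ s | p (f a)} = {a ∈ s | f a ∈ {b ∈ t | p b}} :=
    filter_congr fun a ha ↦ by simp [hf a ha]
  rw [hst, ← sum_card_fiberwise_eq_card_filter]
  exact sum_const_nat fun b hb ↦ hc b (mem_filter.mp hb).1

lemma card_filter_comp_div_card_of_card_fiber_eq {𝕜 : Type*} [Semifield 𝕜] [CharZero 𝕜]
    (hf : ∀ a ∈ s, f a ∈ t)
    (hfib : ∀ b ∈ t, ∀ b' ∈ t, #{a ∈ s | f a = b} = #{a ∈ s | f a = b'})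
    (hs : s.Nonempty) (p : β → Prop) [DecidablePred p] :
    (#{a ∈ s | p (f a)} : 𝕜) / #s = #{b ∈ t | p b} / #t := by
  obtain ⟨a₀, ha₀⟩ := hs
  have hc : ∀ b ∈ t, #{a ∈ s | f a = b} = #{a ∈ s | f a = f a₀} :=
    fun b hb ↦ hfib b hb _ (hf a₀ ha₀)
  have hc₀ : (#{a ∈ s | f a = f a₀} : 𝕜) ≠ 0 :=
    Nat.cast_ne_zero.mpr (card_ne_zero_of_mem (mem_filter.mpr ⟨ha₀, rfl⟩))
  have hs : #s = #t * #{a ∈ s | f a = f a₀} := by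
    simpa using card_filter_comp_eq_mul_of_card_fiber_eq hf hc fun _ ↦ True
  rw [card_filter_comp_eq_mul_of_card_fiber_eq hf hc p, hs, Nat.cast_mul, Nat.cast_mul,
    mul_div_mul_right _ _ hc₀]

end UniformFibers

section Hypergeometric

variable {α ι : Type*} [DecidableEq ι] (A : α → ι)

lemma sum_card_filter_eq_card [Fintype ι] (S : Finset α) : ∑ q, #{k ∈ S | A k = q} = #S :=
  (card_eq_sum_card_fiberwise fun _ _ ↦ mem_coe.mpr (mem_univ _)).symm

lemma filter_biUnion_eq_of_forall_mem [DecidableEq α] [Fintype ι] {f : ι → Finset α}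
    (hf : ∀ q, ∀ k ∈ f q, A k = q) (q : ι) : {k ∈ univ.biUnion f | A k = q} = f q := by
  ext k
  simp only [mem_filter, mem_biUnion, mem_univ, true_and]
  constructor
  · rintro ⟨⟨q', hk⟩, rfl⟩
    rwa [hf q' k hk]
  · exact fun hk ↦ ⟨⟨q, hk⟩, hf q k hk⟩

theorem card_filter_powersetCard_eq_prod_choose [Fintype ι] (U : Finset α) (s : ι → ℕ) :
    #{S ∈ powersetCard (∑ q, s q) U | ∀ q, #{k ∈ S | A k = q} = s q} =
      ∏ q, (#{k ∈ U | A k = q}).choose (s q) := by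
  classical
  have hprod : ∏ q, (#{k ∈ U | A k = q}).choose (s q) =
      #(Fintype.piFinset fun q ↦ powersetCard (s q) {k ∈ U | A k = q}) := by
    simp [Fintype.card_piFinset]
  rw [hprod]
  refine card_nbij' (fun S q ↦ {k ∈ S | A k = q}) (fun f ↦ univ.biUnion f) ?_ ?_ ?_ ?_
  · intro S hS
    obtain ⟨hS, hcard⟩ := mem_filter.mp hS
    exact Fintype.mem_piFinset.mpr fun q ↦
      mem_powersetCard.mpr ⟨filter_subset_filter _ (mem_powersetCard.mp hS).1, hcard q⟩
  · intro f hf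
    simp only [mem_coe, Fintype.mem_piFinset, mem_powersetCard, subset_iff, mem_filter] at hf
    have hcard (q : ι) : #{k ∈ univ.biUnion f | A k = q} = s q := by
      rw [filter_biUnion_eq_of_forall_mem A (fun q k hk ↦ ((hf q).1 hk).2) q, (hf q).2]
    refine mem_filter.mpr ⟨mem_powersetCard.mpr ⟨?_, ?_⟩, hcard⟩
    · exact biUnion_subset.mpr fun q _ k hk ↦ ((hf q).1 hk).1
    · simp only [← sum_card_filter_eq_card A (univ.biUnion f), hcard]
  · intro S _
    ext k
    simp
  · intro f hf
    simp only [mem_coe, Fintype.mem_piFinset, mem_powersetCard, subset_iff, mem_filter] at hf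
    exact funext (filter_biUnion_eq_of_forall_mem A fun q k hk ↦ ((hf q).1 hk).2)

lemma card_filter_compl_pair [Fintype α] [DecidableEq α] {i j : α} (hA : A i ≠ A j) (q : ι) :
    #{k ∈ ({i, j}ᶜ : Finset α) | A k = q} =
      #{k | A k = q} - (if q = A i then 1 else 0) - (if q = A j then 1 else 0) := by
  have hsdiff : {k ∈ ({i, j}ᶜ : Finset α) | A k = q} =
      (({k | A k = q} : Finset α).erase i).erase j := by
    ext k
    simp only [mem_filter, mem_compl, mem_insert, mem_singleton, mem_erase, mem_univ]
    tauto
  rw [hsdiff, card_erase_eq_ite, card_erase_eq_ite]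
  simp only [mem_erase, mem_filter, mem_univ, true_and]
  grind

theorem prod_choose_card_filter_compl_pair [Fintype α] [DecidableEq α] [Fintype ι] {i j : α}
    (hA : A i ≠ A j) (r : ι → ℕ) :
    ∏ q, (#{k ∈ ({i, j}ᶜ : Finset α) | A k = q}).choose (r q - if q = A j then 1 else 0) =
      (#{k | A k = A i} - 1).choose (r (A i)) * (#{k | A k = A j} - 1).choose (r (A j) - 1) *
        ∏ q ∈ (univ.erase (A i)).erase (A j), (#{k | A k = q}).choose (r q) := by
  rw [← mul_prod_erase univ _ (mem_univ (A i)),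
    ← mul_prod_erase (univ.erase (A i)) _ (mem_erase.mpr ⟨hA.symm, mem_univ (A j)⟩), ← mul_assoc]
  simp only [card_filter_compl_pair A hA, if_pos, if_neg hA, if_neg hA.symm, Nat.sub_zero]
  refine congrArg _ (prod_congr rfl fun q hq ↦ ?_)
  obtain ⟨hqj, hqi, -⟩ := by simpa only [mem_erase] using hq
  simp only [if_neg hqi, if_neg hqj, Nat.sub_zero]

end Hypergeometric

section Multiplicities

variable {ι : Type*} [DecidableEq ι]

/-- The multisets with multiplicities `r` and `r'` contain `b` and `a` respectively, and removing
one copy of `b` from the first leaves the same multiset as removing one copy of `a` from the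
second. The first two conditions make the truncated subtractions exact. -/
def EqAfterRemoval (r r' : ι → ℕ) (b a : ι) : Prop :=
  1 ≤ r b ∧ 1 ≤ r' a ∧ ∀ q, r q - (if q = b then 1 else 0) = r' q - (if q = a then 1 else 0)

lemma forall_add_ite_eq_iff {c r : ι → ℕ} {b : ι} :
    (∀ q, c q + (if q = b then 1 else 0) = r q) ↔
      1 ≤ r b ∧ ∀ q, c q = r q - if q = b then 1 else 0 := by
  refine ⟨fun h ↦ ⟨?_, fun q ↦ ?_⟩, fun ⟨hb, h⟩ q ↦ ?_⟩
  · simp [← h b]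
  · simp [← h q]
  · rw [h q]
    split_ifs with hq
    · exact Nat.sub_add_cancel (hq ▸ hb)
    · rfl

lemma forall_add_ite_eq_and_forall_add_ite_eq_iff {c r r' : ι → ℕ} {b a : ι} :
    ((∀ q, c q + (if q = b then 1 else 0) = r q) ∧ ∀ q, c q + (if q = a then 1 else 0) = r' q) ↔
      EqAfterRemoval r r' b a ∧ ∀ q, c q = r q - if q = b then 1 else 0 := by
  rw [forall_add_ite_eq_iff, forall_add_ite_eq_iff, EqAfterRemoval]
  constructor
  · rintro ⟨⟨hb, hr⟩, ha, hr'⟩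
    exact ⟨⟨hb, ha, fun q ↦ (hr q).symm.trans (hr' q)⟩, hr⟩
  · rintro ⟨⟨hb, ha, h⟩, hr⟩
    exact ⟨⟨hb, hr⟩, ha, fun q ↦ (hr q).trans (h q)⟩

lemma sum_sub_ite_eq [Fintype ι] {r : ι → ℕ} {b : ι} (hb : 1 ≤ r b) :
    ∑ q, (r q - if q = b then 1 else 0) = ∑ q, r q - 1 := by
  rw [sum_tsub_distrib _ fun q _ ↦ ?_, sum_ite_eq' univ b, if_pos (mem_univ b)]
  split_ifs with hq
  · exact hq ▸ hb
  · exact Nat.zero_le _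

end Multiplicities

section Exchangeable

variable {α β : Type*}

/-- A family of assignments of units to groups is exchangeable if it is stable under relabelling
the units, so that the uniform distribution on it treats all units alike. -/
def IsExchangeable (G : Finset (α → β)) : Prop :=
  ∀ σ : Equiv.Perm α, ∀ g ∈ G, g ∘ σ ∈ G

variable {G : Finset (α → β)}

lemma IsExchangeable.comp_mem_iff (hG : IsExchangeable G) (σ : Equiv.Perm α) {g : α → β} :
    g ∘ σ ∈ G ↔ g ∈ G :=
  ⟨fun h ↦ by simpa [Function.comp_assoc] using hG σ.symm _ h, hG σ g⟩

open Classical in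
theorem IsExchangeable.card_filter_preimage_eq (hG : IsExchangeable G) {T T' : Finset α}
    (h : #T = #T') :
    #{g ∈ G | ∃ t, g ⁻¹' {t} = T} = #{g ∈ G | ∃ t, g ⁻¹' {t} = T'} := by
  obtain ⟨σ, rfl⟩ := Equiv.Perm.exists_map_finset_eq T T' h
  refine card_equiv (σ.arrowCongr (Equiv.refl β)) fun g ↦ ?_
  have hσ : σ.arrowCongr (Equiv.refl β) g = g ∘ σ.symm := rfl
  simp only [hσ, mem_filter, hG.comp_mem_iff, Set.preimage_comp, coe_map, Equiv.coe_toEmbedding,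
    σ.image_eq_preimage_symm, σ.symm.surjective.preimage_injective.eq_iff]

variable [Fintype α] [DecidableEq α] [DecidableEq β] {i j : α}

/-- The units other than `i` and `j` in the group of `i` under the assignment `g`. When `i` and `j`
share a group these are their common groupmates; otherwise the value has no symmetry in `i`, `j`. -/
def commonPeers (g : α → β) (i j : α) : Finset α :=
  {k ∈ {i, j}ᶜ | g k = g i}

lemma mem_commonPeers {g : α → β} {k : α} :
    k ∈ commonPeers g i j ↔ (k ≠ i ∧ k ≠ j) ∧ g k = g i := by
  simp [commonPeers]

lemma commonPeers_comm {g : α → β} (hg : g i = g j) : commonPeers g i j = commonPeers g j i := by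
  simp only [commonPeers, hg, pair_comm i j]

lemma card_commonPeers_add_two (hij : i ≠ j) {g : α → β} (hg : g i = g j) :
    #(commonPeers g i j) + 2 = #{k | g k = g i} := by
  have hsub : {i, j} ⊆ ({k | g k = g i} : Finset α) := by
    simp [insert_subset_iff, hg]
  have hsdiff : commonPeers g i j = ({k | g k = g i} : Finset α) \ {i, j} := by
    ext k
    simp [mem_commonPeers, and_comm]
  rw [hsdiff, ← card_pair hij, card_sdiff_add_card_eq_card hsub]

lemma commonPeers_eq_iff_exists_preimage_eq {g : α → β} {S : Finset α} (hS : S ⊆ {i, j}ᶜ) :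
    g i = g j ∧ commonPeers g i j = S ↔ ∃ t, g ⁻¹' {t} = (({i, j} ∪ S : Finset α) : Set α) := by
  simp only [Set.ext_iff, Finset.ext_iff, mem_commonPeers, Set.mem_preimage, Set.mem_singleton_iff,
    mem_coe, mem_union, mem_insert, mem_singleton]
  have hS (k : α) (hk : k ∈ S) : k ≠ i ∧ k ≠ j := by simpa using hS hk
  constructor
  · rintro ⟨hij, h⟩
    refine ⟨g i, fun k ↦ ?_⟩
    grind
  · rintro ⟨t, ht⟩
    have hi : g i = t := (ht i).mpr (.inl (.inl rfl))
    have hj : g j = t := (ht j).mpr (.inl (.inr rfl))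
    refine ⟨hi.trans hj.symm, fun k ↦ ?_⟩
    grind

lemma IsExchangeable.card_filter_commonPeers_eq (hG : IsExchangeable G) {S S' : Finset α}
    (hS : S ⊆ {i, j}ᶜ) (hS' : S' ⊆ {i, j}ᶜ) (h : #S = #S') :
    #{g ∈ G | g i = g j ∧ commonPeers g i j = S} =
      #{g ∈ G | g i = g j ∧ commonPeers g i j = S'} := by
  classical
  simp only [commonPeers_eq_iff_exists_preimage_eq hS, commonPeers_eq_iff_exists_preimage_eq hS']
  apply hG.card_filter_preimage_eq
  rw [card_union_of_disjoint (disjoint_compl_right.mono_right hS),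
    card_union_of_disjoint (disjoint_compl_right.mono_right hS'), h]

theorem IsExchangeable.card_filter_commonPeers_div {𝕜 : Type*} [Semifield 𝕜] [CharZero 𝕜]
    (hG : IsExchangeable G) (hij : i ≠ j) {N : ℕ} (hN : ∀ g ∈ G, #{k | g k = g i} = N)
    (hne : {g ∈ G | g i = g j}.Nonempty) (p : Finset α → Prop) [DecidablePred p] :
    (#{g ∈ G | g i = g j ∧ p (commonPeers g i j)} : 𝕜) / #{g ∈ G | g i = g j} =
      #{S ∈ powersetCard (N - 2) {i, j}ᶜ | p S} / (Fintype.card α - 2).choose (N - 2) := by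
  have hmem : ∀ g ∈ {g ∈ G | g i = g j},
      commonPeers g i j ∈ powersetCard (N - 2) ({i, j}ᶜ : Finset α) := by
    intro g hg
    obtain ⟨hgG, hg⟩ := mem_filter.mp hg
    refine mem_powersetCard.mpr ⟨filter_subset _ _, ?_⟩
    rw [← hN g hgG, ← card_commonPeers_add_two hij hg, Nat.add_sub_cancel]
  have hfib : ∀ S ∈ powersetCard (N - 2) ({i, j}ᶜ : Finset α),
      ∀ S' ∈ powersetCard (N - 2) ({i, j}ᶜ : Finset α),
      #{g ∈ {g ∈ G | g i = g j} | commonPeers g i j = S} =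
        #{g ∈ {g ∈ G | g i = g j} | commonPeers g i j = S'} := by
    intro S hS S' hS'
    obtain ⟨hS, hcard⟩ := mem_powersetCard.mp hS
    obtain ⟨hS', hcard'⟩ := mem_powersetCard.mp hS'
    simpa only [filter_filter] using
      hG.card_filter_commonPeers_eq hS hS' (hcard.trans hcard'.symm)
  rw [← filter_filter, card_filter_comp_div_card_of_card_fiber_eq hmem hfib hne p,
    card_powersetCard, card_compl, card_pair hij]

end Exchangeable

section RandomPartition

variable {m K Hn : ℕ} (A : Fin (m * (K + 1)) → Fin Hn) {i j : Fin (m * (K + 1))}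

lemma card_filter_eq_of_mem_groupAssignSet {g : Fin (m * (K + 1)) → Fin m}
    (hg : g ∈ groupAssignSet m K) (t : Fin m) : #{k | g k = t} = K + 1 :=
  (mem_filter.mp hg).2 t

lemma isExchangeable_groupAssignSet : IsExchangeable (groupAssignSet m K) := by
  intro σ g hg
  refine mem_filter.mpr ⟨mem_univ _, fun t ↦ ?_⟩
  exact (card_equiv σ (by simp)).trans (card_filter_eq_of_mem_groupAssignSet hg t)

lemma peerCount_eq_card_commonPeers_add (hij : i ≠ j) {g : Fin (m * (K + 1)) → Fin m}
    (hg : g i = g j) (q : Fin Hn) :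
    peerCount A g i q =
      #{k ∈ commonPeers g i j | A k = q} + if q = A j then 1 else 0 := by
  have hfilter : ({k | k ≠ i ∧ g k = g i ∧ A k = q} : Finset _) =
      {k ∈ insert j (commonPeers g i j) | A k = q} := by
    ext k
    simp only [mem_filter, mem_univ, true_and, mem_insert, mem_commonPeers]
    grind
  have hj : j ∉ commonPeers g i j := by simp [mem_commonPeers]
  rw [peerCount, hfilter, filter_insert]
  grind

lemma peerCounts_eq_iff (hij : i ≠ j) {g : Fin (m * (K + 1)) → Fin m} (hg : g i = g j)
    {r r' : Fin Hn → ℕ} :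
    ((∀ q, peerCount A g i q = r q) ∧ ∀ q, peerCount A g j q = r' q) ↔
      EqAfterRemoval r r' (A j) (A i) ∧
        ∀ q, #{k ∈ commonPeers g i j | A k = q} = r q - if q = A j then 1 else 0 := by
  simp only [peerCount_eq_card_commonPeers_add A hij hg,
    peerCount_eq_card_commonPeers_add A hij.symm hg.symm, ← commonPeers_comm hg,
    forall_add_ite_eq_and_forall_add_ite_eq_iff]

theorem filter_peerCounts_eq_empty (hij : i ≠ j) {r r' : Fin Hn → ℕ}
    (hr : ¬ EqAfterRemoval r r' (A j) (A i)) :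
    {g ∈ groupAssignSet m K | g i = g j ∧
      (∀ q, peerCount A g i q = r q) ∧ ∀ q, peerCount A g j q = r' q} = ∅ :=
  filter_eq_empty_iff.mpr fun _ _ h ↦ hr ((peerCounts_eq_iff A hij h.1).mp h.2).1

lemma EqAfterRemoval.filter_peerCounts_eq (hij : i ≠ j) {r r' : Fin Hn → ℕ}
    (hr : EqAfterRemoval r r' (A j) (A i)) :
    {g ∈ groupAssignSet m K | g i = g j ∧
      (∀ q, peerCount A g i q = r q) ∧ ∀ q, peerCount A g j q = r' q} =
    {g ∈ groupAssignSet m K | g i = g j ∧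
      ∀ q, #{k ∈ commonPeers g i j | A k = q} = r q - if q = A j then 1 else 0} :=
  filter_congr fun _ _ ↦ and_congr_right fun hg ↦ by
    simp only [peerCounts_eq_iff A hij hg, hr, true_and]

theorem card_filter_peerCounts_div (hij : i ≠ j)
    (hne : {g ∈ groupAssignSet m K | g i = g j}.Nonempty) {r r' : Fin Hn → ℕ}
    (hsum : ∑ q, r q = K) (hr : EqAfterRemoval r r' (A j) (A i)) :
    (#{g ∈ groupAssignSet m K | g i = g j ∧
        (∀ q, peerCount A g i q = r q) ∧ ∀ q, peerCount A g j q = r' q} : ℝ) /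
      #{g ∈ groupAssignSet m K | g i = g j} =
    (∏ q, (#{k ∈ ({i, j}ᶜ : Finset _) | A k = q}).choose (r q - if q = A j then 1 else 0) : ℕ) /
      (m * (K + 1) - 2).choose (K - 1) := by
  have hsize : ∑ q, (r q - if q = A j then 1 else 0) = K + 1 - 2 := by
    rw [sum_sub_ite_eq hr.1, hsum, Nat.add_sub_add_right K 1 1]
  -- `convert` reconciles the decidability instances for `∀ q : Fin Hn` and `∀ q : ι`.
  have hcount : #{S ∈ powersetCard (K + 1 - 2) {i, j}ᶜ |
      ∀ q, #{k ∈ S | A k = q} = r q - if q = A j then 1 else 0} =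
        ∏ q, (#{k ∈ ({i, j}ᶜ : Finset _) | A k = q}).choose (r q - if q = A j then 1 else 0) := by
    rw [← hsize]
    convert card_filter_powersetCard_eq_prod_choose A _ _
  rw [hr.filter_peerCounts_eq A hij,
    isExchangeable_groupAssignSet.card_filter_commonPeers_div hij
      (fun g hg ↦ card_filter_eq_of_mem_groupAssignSet hg (g i)) hne
      (fun S ↦ ∀ q, #{k ∈ S | A k = q} = r q - if q = A j then 1 else 0),
    hcount, Fintype.card_fin, Nat.add_sub_add_right K 1 1]

end RandomPartition

/-- Under random partitioning, conditional on distinct units `i` (attribute `a`)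
and `j` (attribute `a'`) being in the same group, the probability that `i`'s
peer attribute multiset is `r` (multiplicities `rc`) and `j`'s is `r'`
(multiplicities `rc'`) is zero unless `a' ∈ r`, `a ∈ r'`, and `r` with one copy
of `a'` removed equals `r'` with one copy of `a` removed; when these hold and
`a ≠ a'`, it equals
`C(n_{[a]}−1, rc a) C(n_{[a']}−1, rc a' − 1) Π_{q≠a,a'} C(n_{[q]}, rc q) / C(n−2, K−1)`. -/
theorem random_partition_joint_given_same_group
    (m K Hn : ℕ) (hK : 1 ≤ K) (A : Fin (m * (K + 1)) → Fin Hn)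
    (i j : Fin (m * (K + 1))) (hij : i ≠ j)
    (hd : ((groupAssignSet m K).filter (fun g => g i = g j)).Nonempty)
    (rc rc' : Fin Hn → ℕ) (hrc : ∑ q : Fin Hn, rc q = K) (hrc' : ∑ q : Fin Hn, rc' q = K) :
    (¬ (1 ≤ rc (A j) ∧ 1 ≤ rc' (A i) ∧ ∀ q : Fin Hn,
          rc q - (if q = A j then 1 else 0) = rc' q - (if q = A i then 1 else 0)) →
      ((((groupAssignSet m K).filter (fun g => g i = g j ∧
            (∀ q, peerCount A g i q = rc q) ∧ (∀ q, peerCount A g j q = rc' q))).card : ℝ) /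
          ((((groupAssignSet m K).filter (fun g => g i = g j)).card : ℕ) : ℝ)) = 0) ∧
    ((1 ≤ rc (A j) ∧ 1 ≤ rc' (A i) ∧ ∀ q : Fin Hn,
          rc q - (if q = A j then 1 else 0) = rc' q - (if q = A i then 1 else 0)) →
      A i ≠ A j →
      ((((groupAssignSet m K).filter (fun g => g i = g j ∧
            (∀ q, peerCount A g i q = rc q) ∧ (∀ q, peerCount A g j q = rc' q))).card : ℝ) /
          ((((groupAssignSet m K).filter (fun g => g i = g j)).card : ℕ) : ℝ)) =
        ((((univ.filter (fun k => A k = A i)).card - 1).choose (rc (A i)) *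
            (((univ.filter (fun k => A k = A j)).card - 1).choose (rc (A j) - 1)) *
            ∏ q ∈ (univ.erase (A i)).erase (A j),
              ((univ.filter (fun k => A k = q)).card).choose (rc q) : ℕ) : ℝ) /
          (((m * (K + 1) - 2).choose (K - 1) : ℕ) : ℝ)) := by
  refine ⟨fun hr ↦ ?_, fun hr hA ↦ ?_⟩
  · rw [filter_peerCounts_eq_empty A hij hr, card_empty, Nat.cast_zero, zero_div]
  · rw [card_filter_peerCounts_div A hij hd hrc hr, prod_choose_card_filter_compl_pair A hA rc]
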